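/- cof(N) equals the least cardinality of a family Φ of slaloms such that for every f ∈ ω^ω there exists φ ∈ Φ with f(n) ∈ φ(n) for all but finitely many n. Here cof(N) is the least cardinality of a family of null subsets of 2^ω that is cofinal in the null ideal under inclusion. (In the paper's notation: d_{⊆*} = cof(N).) -/

import Mathlib

open Filter Set MeasureTheory Cardinal

/-- A slalom: φ : ℕ → Finset ℕ with |φ(n)| ≤ (n+1)^k for all n, for some fixed k. -/
def IsSlalom (φ : ℕ → Finset ℕ) : Prop := ∃ k : ℕ, ∀ n : ℕ, (φ n).card ≤ (n + 1) ^ k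

/-- A measure on Cantor space is the fair-coin product measure iff it is a probability
measure giving each cylinder determined by finitely many coordinates its fair value. -/
def IsFairCoin (μ : Measure (ℕ → Bool)) : Prop :=
  IsProbabilityMeasure μ ∧
  ∀ (s : Finset ℕ) (σ : ℕ → Bool),
    μ {f : ℕ → Bool | ∀ i ∈ s, f i = σ i} = (1 / 2 : ENNReal) ^ s.card

/-!
A null set lies in `limsup C` for some sets `C n` from a countable algebra with `μ (C n) ≤ 2⁻ⁿ`.
Enumerating, for each `n`, the candidates for `C n` turns the null set into a function `ℕ → ℕ`,
and a slalom capturing this function gives a null set containing the original one, because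
`∑ (n + 1) ^ k * 2⁻ⁿ` converges.

Conversely, let `G n i` be open, independent in `i` and of measure about `n⁻²`, and code `f` by the
null set `limsup (G n (f n))`. If a null set `A` contains it, take a closed `K` of positive measure
disjoint from `A`. The Baire category theorem in the support of `μ` restricted to `K` yields a basic
open `V` such that `V ∩ K` is non-null but meets `G n (f n)` in a null set for all large `n`.
Independence allows only polynomially many `i` with `μ (V ∩ K ∩ G n i) = 0`, so these `i` form a
slalom capturing `f`. Each `A` thus gives rise to countably many slaloms, one for each `V`; this
suffices since no countable family of slaloms captures every function.
-/

open TopologicalSpace ProbabilityTheory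
open scoped ENNReal

universe u

/-- A family of slaloms localizing every function, that is, a witness for `d_{⊆*}`. -/
def IsLocalizing (Φ : Set (ℕ → Finset ℕ)) : Prop :=
  (∀ φ ∈ Φ, IsSlalom φ) ∧ ∀ f : ℕ → ℕ, ∃ φ ∈ Φ, ∀ᶠ n in atTop, f n ∈ φ n

/-- The cardinal `d_{⊆*}`: the least size of a localizing family of slaloms. -/
noncomputable def localizationNumber : Cardinal.{0} :=
  sInf {c | ∃ Φ : Set (ℕ → Finset ℕ), #Φ = c ∧ IsLocalizing Φ}

/-- A family of null sets that is cofinal in the null ideal of `μ` under inclusion. -/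
def IsNullCofinal {X : Type u} [MeasurableSpace X] (μ : Measure X) (𝒜 : Set (Set X)) : Prop :=
  (∀ A ∈ 𝒜, μ A = 0) ∧ ∀ B : Set X, μ B = 0 → ∃ A ∈ 𝒜, B ⊆ A

/-- The cofinality of the null ideal of `μ`; for the fair-coin measure this is `cof(N)`. -/
noncomputable def nullCof {X : Type u} [MeasurableSpace X] (μ : Measure X) : Cardinal.{u} :=
  sInf {c | ∃ 𝒜 : Set (Set X), #𝒜 = c ∧ IsNullCofinal μ 𝒜}

section Cardinals

lemma IsLocalizing.localizationNumber_le {Φ : Set (ℕ → Finset ℕ)} (hΦ : IsLocalizing Φ) :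
    localizationNumber ≤ #Φ :=
  csInf_le' ⟨Φ, rfl, hΦ⟩

lemma exists_isLocalizing_mk_eq :
    ∃ Φ : Set (ℕ → Finset ℕ), #Φ = localizationNumber ∧ IsLocalizing Φ :=
  csInf_mem (s := {c | ∃ Φ : Set (ℕ → Finset ℕ), #Φ = c ∧ IsLocalizing Φ})
    ⟨_, {φ | IsSlalom φ}, rfl, fun _ hφ => hφ, fun f => ⟨fun n => {f n}, ⟨0, by simp⟩, by simp⟩⟩

variable {X : Type u} [MeasurableSpace X] {μ : Measure X}

lemma IsNullCofinal.nullCof_le {𝒜 : Set (Set X)} (h𝒜 : IsNullCofinal μ 𝒜) : nullCof μ ≤ #𝒜 :=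
  csInf_le' ⟨𝒜, rfl, h𝒜⟩

variable (μ) in
lemma exists_isNullCofinal_mk_eq : ∃ 𝒜 : Set (Set X), #𝒜 = nullCof μ ∧ IsNullCofinal μ 𝒜 :=
  csInf_mem (s := {c | ∃ 𝒜 : Set (Set X), #𝒜 = c ∧ IsNullCofinal μ 𝒜})
    ⟨_, {A | μ A = 0}, rfl, fun _ hA => hA, fun B hB => ⟨B, hB, subset_rfl⟩⟩

lemma not_countable_of_isLocalizing {Φ : Set (ℕ → Finset ℕ)} (hΦ : IsLocalizing Φ) :
    ¬ Φ.Countable := by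
  intro hcount
  obtain ⟨φ₀, hφ₀, -⟩ := hΦ.2 0
  obtain ⟨ψ, rfl⟩ := hcount.exists_eq_range ⟨φ₀, hφ₀⟩
  choose f hf using fun n =>
    Infinite.exists_notMem_finset ((Finset.range (n + 1)).biUnion fun j => ψ j n)
  obtain ⟨_, ⟨j, rfl⟩, hj⟩ := hΦ.2 f
  obtain ⟨n, hfn, hjn⟩ := (hj.and (eventually_ge_atTop j)).exists
  exact hf n (Finset.mem_biUnion.2 ⟨j, Finset.mem_range_succ_iff.2 hjn, hfn⟩)

lemma aleph0_lt_localizationNumber : ℵ₀ < localizationNumber := by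
  obtain ⟨Φ, hcard, hΦ⟩ := exists_isLocalizing_mk_eq
  rw [← hcard, ← not_le, le_aleph0_iff_set_countable]
  exact not_countable_of_isLocalizing hΦ

end Cardinals

section NullSetsFromSlaloms

lemma exists_limsup_subset_limsup_of_tsum_ne_top {X : Type*} [MeasurableSpace X] {μ : Measure X}
    {𝒞 : Set (Set X)} (h𝒞 : IsSetRing 𝒞) {E : ℕ → Set X} (hE : ∀ i, E i ∈ 𝒞)
    (hsum : ∑' i, μ (E i) ≠ ∞) {ε : ℕ → ℝ≥0∞} (hε : ∀ k, 0 < ε k) :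
    ∃ C : ℕ → Set X, (∀ k, C k ∈ 𝒞 ∧ μ (C k) ≤ ε k) ∧ limsup E atTop ⊆ limsup C atTop := by
  obtain ⟨N, hN, htail⟩ := extraction_forall_of_eventually fun k =>
    (ENNReal.tendsto_sum_nat_add _ hsum).eventually_le_const (hε k)
  refine ⟨fun k => ⋃ i ∈ Finset.Ico (N k) (N (k + 1)), E i,
    fun k => ⟨h𝒞.biUnion_mem _ fun i _ => hE i, ?_⟩, fun x hx => ?_⟩
  · calc μ (⋃ i ∈ Finset.Ico (N k) (N (k + 1)), E i)
        ≤ ∑ i ∈ Finset.Ico (N k) (N (k + 1)), μ (E i) := measure_biUnion_finset_le _ _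
      _ = ∑ i ∈ Finset.range (N (k + 1) - N k), μ (E (i + N k)) := by
          simp only [Finset.sum_Ico_eq_sum_range, add_comm]
      _ ≤ ∑' i, μ (E (i + N k)) := ENNReal.sum_le_tsum _
      _ ≤ ε k := htail k
  · rw [mem_limsup_iff_frequently_mem, frequently_atTop] at hx ⊢
    intro m
    obtain ⟨i, hi, hxi⟩ := hx (N m)
    have hNm : StrictMono fun k => N (m + k) := hN.comp (strictMono_id.const_add m)
    obtain ⟨k, hik⟩ : ∃ k, i ∈ Ico (N (m + k)) (N (m + k + 1)) := mem_iUnion.1 <|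
      (iUnion_Ico_map_succ_eq_Ici (fun k => hNm.monotone bot_le)
        hNm.not_bddAbove_range_of_isSuccArchimedean).symm.subset hi
    exact ⟨m + k, m.le_add_right k, mem_biUnion (Finset.mem_Ico.2 hik) hxi⟩

variable {X : Type u} [TopologicalSpace X] [SecondCountableTopology X]

variable (X) in
/-- The algebra of sets generated by a countable basis; its countably many members are the sets
coded by natural numbers when a null set is turned into a function. -/
def basicAlgebra : Set (Set X) := generateSetAlgebra (countableBasis X)

lemma isSetRing_basicAlgebra : IsSetRing (basicAlgebra X) :=
  isSetAlgebra_generateSetAlgebra.isSetRing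

lemma countable_basicAlgebra : (basicAlgebra X).Countable :=
  countable_generateSetAlgebra (countable_countableBasis X)

lemma exists_disjoint_basicAlgebra_iUnion_eq {U : Set X} (hU : IsOpen U) :
    ∃ W : ℕ → Set X, (∀ i, W i ∈ basicAlgebra X) ∧ Pairwise (Function.onFun Disjoint W) ∧
      ⋃ i, W i = U := by
  obtain ⟨S, hS, rfl⟩ := (isBasis_countableBasis X).open_eq_sUnion hU
  obtain ⟨V, hV⟩ := (((countable_countableBasis X).mono hS).insert ∅).exists_eq_range
    (insert_nonempty _ _)
  have hV_mem (i : ℕ) : V i ∈ basicAlgebra X := by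
    rcases hV.symm.subset (mem_range_self i) with hi | hi
    · exact hi ▸ isSetRing_basicAlgebra.empty_mem
    · exact self_subset_generateSetAlgebra (hS hi)
  refine ⟨disjointed V, fun i => isSetRing_basicAlgebra.disjointed_mem hV_mem i,
    disjoint_disjointed V, ?_⟩
  rw [iUnion_disjointed, ← sUnion_range, ← hV, sUnion_insert, empty_union]

variable [MeasurableSpace X] [OpensMeasurableSpace X] {μ : Measure X}

lemma measurableSet_of_mem_basicAlgebra {s : Set X} (hs : s ∈ basicAlgebra X) :
    MeasurableSet s :=
  IsSetAlgebra.generateSetAlgebra_subset (ℬ := {s | MeasurableSet s})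
    (fun _ ht => (isOpen_of_mem_countableBasis ht).measurableSet)
    ⟨MeasurableSet.empty, fun _ ht => ht.compl, fun _ _ ht ht' => ht.union ht'⟩ hs

lemma exists_basicAlgebra_limsup_of_measure_eq_zero [μ.OuterRegular] {B : Set X} (hB : μ B = 0) :
    ∃ E : ℕ → Set X, (∀ i, E i ∈ basicAlgebra X) ∧ ∑' i, μ (E i) ≠ ∞ ∧ B ⊆ limsup E atTop := by
  have hopen (n : ℕ) : ∃ U ⊇ B, IsOpen U ∧ μ U < 2⁻¹ ^ n :=
    B.exists_isOpen_lt_of_lt _ (hB ▸ ENNReal.pow_pos (by simp) n)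
  choose U hBU hUo hUμ using hopen
  choose W hW hWd hWU using fun n => exists_disjoint_basicAlgebra_iUnion_eq (hUo n)
  have hsum (n : ℕ) : ∑' j, μ (W n j) ≤ 2⁻¹ ^ n := by
    rw [← measure_iUnion (hWd n) fun j => measurableSet_of_mem_basicAlgebra (hW n j), hWU]
    exact (hUμ n).le
  refine ⟨fun i => W i.unpair.1 i.unpair.2, fun i => hW _ _, ?_, fun x hx => ?_⟩
  · have hprod : ∑' i : ℕ, μ (W i.unpair.1 i.unpair.2) = ∑' n, ∑' j, μ (W n j) :=
      (Nat.pairEquiv.symm.tsum_eq fun p : ℕ × ℕ => μ (W p.1 p.2)).trans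
        (ENNReal.tsum_prod (f := fun n j => μ (W n j)))
    rw [hprod]
    refine ne_top_of_le_ne_top ?_ (ENNReal.tsum_le_tsum hsum)
    simp [ENNReal.tsum_geometric]
  · rw [mem_limsup_iff_frequently_mem, frequently_atTop]
    intro m
    obtain ⟨j, hj⟩ := mem_iUnion.1 ((hWU m).symm.subset (hBU m hx))
    exact ⟨Nat.pair m j, Nat.left_le_pair m j, by simpa using hj⟩

lemma tsum_pow_mul_geometric_ne_top (k : ℕ) :
    ∑' n : ℕ, ((n + 1 : ℕ) : ℝ≥0∞) ^ k * 2⁻¹ ^ n ≠ ∞ := by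
  have hsum : Summable fun n : ℕ => ((n + 1 : ℕ) : ℝ) ^ k * 2⁻¹ ^ n := by
    refine (((summable_nat_add_iff 1).2 (summable_pow_mul_geometric_of_norm_lt_one k
      (r := (2⁻¹ : ℝ)) (by norm_num))).mul_left 2).congr fun n => ?_
    ring
  convert hsum.tsum_ofReal_ne_top with n
  rw [ENNReal.ofReal_mul (by positivity), ENNReal.ofReal_pow (by positivity),
    ENNReal.ofReal_pow (by positivity), ENNReal.ofReal_natCast, ENNReal.ofReal_inv_of_pos two_pos,
    ENNReal.ofReal_ofNat]

lemma IsSlalom.measure_limsup_biUnion_eq_zero {X : Type*} [MeasurableSpace X] {μ : Measure X}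
    {φ : ℕ → Finset ℕ} (hφ : IsSlalom φ) {S : ℕ → ℕ → Set X} (hS : ∀ n i, μ (S n i) ≤ 2⁻¹ ^ n) :
    μ (limsup (fun n => ⋃ i ∈ φ n, S n i) atTop) = 0 := by
  obtain ⟨k, hk⟩ := hφ
  refine measure_limsup_atTop_eq_zero (ne_top_of_le_ne_top (tsum_pow_mul_geometric_ne_top k)
    (ENNReal.tsum_le_tsum fun n => ?_))
  calc μ (⋃ i ∈ φ n, S n i) ≤ ∑ i ∈ φ n, μ (S n i) := measure_biUnion_finset_le _ _
    _ ≤ (φ n).card • 2⁻¹ ^ n := Finset.sum_le_card_nsmul _ _ _ fun i _ => hS n i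
    _ ≤ ((n + 1 : ℕ) : ℝ≥0∞) ^ k * 2⁻¹ ^ n := by
        rw [nsmul_eq_mul]
        gcongr
        exact_mod_cast hk n

theorem nullCof_le_localizationNumber (μ : Measure X) [μ.OuterRegular] :
    nullCof μ ≤ lift.{u} localizationNumber := by
  have hcode (n : ℕ) : ∃ S : ℕ → Set X, {C ∈ basicAlgebra X | μ C ≤ 2⁻¹ ^ n} = range S :=
    (countable_basicAlgebra.mono (sep_subset _ _)).exists_eq_range
      ⟨∅, isSetRing_basicAlgebra.empty_mem, by simp⟩
  choose S hS using hcode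
  have hS_le (n i : ℕ) : μ (S n i) ≤ 2⁻¹ ^ n := ((hS n).symm.subset (mem_range_self i)).2
  obtain ⟨Φ, hcard, hΦ, hloc⟩ := exists_isLocalizing_mk_eq
  let nullSet (φ : ℕ → Finset ℕ) : Set X := limsup (fun n => ⋃ i ∈ φ n, S n i) atTop
  have hcof : IsNullCofinal μ (nullSet '' Φ) := by
    refine ⟨forall_mem_image.2 fun φ hφ => (hΦ φ hφ).measure_limsup_biUnion_eq_zero hS_le,
      fun B hB => ?_⟩
    obtain ⟨E, hE, hsum, hBE⟩ := exists_basicAlgebra_limsup_of_measure_eq_zero hB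
    obtain ⟨C, hC, hEC⟩ := exists_limsup_subset_limsup_of_tsum_ne_top isSetRing_basicAlgebra hE
      hsum fun n => ENNReal.pow_pos (by simp : (0 : ℝ≥0∞) < 2⁻¹) n
    choose f hf using fun n => (hS n).subset (hC n)
    obtain ⟨φ, hφ, hfφ⟩ := hloc f
    refine ⟨nullSet φ, mem_image_of_mem _ hφ, (hBE.trans hEC).trans fun x hx => ?_⟩
    rw [mem_limsup_iff_frequently_mem] at hx ⊢
    refine (hx.and_eventually hfφ).mono fun n ⟨hxC, hfn⟩ => mem_biUnion hfn ?_
    rwa [hf]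
  calc nullCof μ ≤ #(nullSet '' Φ) := hcof.nullCof_le
    _ ≤ lift.{u} #Φ := by simpa only [lift_uzero] using mk_image_le_lift (f := nullSet) (s := Φ)
    _ = lift.{u} localizationNumber := by rw [hcard]

end NullSetsFromSlaloms

section SlalomsFromNullSets

lemma encard_le_of_forall_finset_card_le {α : Type*} {s : Set α} {m : ℕ}
    (h : ∀ F : Finset α, ↑F ⊆ s → F.card ≤ m) : s.encard ≤ m := by
  by_contra! hlt
  obtain ⟨t, hts, ht⟩ := exists_subset_encard_eq (Order.add_one_le_of_lt hlt)
  have ht' : t.encard = (m + 1 : ℕ) := ht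
  lift t to Finset α using finite_of_encard_eq_coe ht'
  rw [encard_coe_eq_coe_finsetCard, Nat.cast_inj] at ht'
  exact (h t hts).not_gt (ht' ▸ m.lt_succ_self)

lemma exists_isSlalom_of_encard_le {Z : ℕ → Set ℕ} {k : ℕ}
    (hZ : ∀ᶠ n in atTop, (Z n).encard ≤ ((n + 1) ^ k : ℕ)) :
    ∃ φ, IsSlalom φ ∧ ∀ᶠ n in atTop, Z n ⊆ φ n := by
  have hchoice (n : ℕ) : ∃ F : Finset ℕ, F.card ≤ (n + 1) ^ k ∧
      ((Z n).encard ≤ ((n + 1) ^ k : ℕ) → Z n ⊆ F) := by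
    by_cases h : (Z n).encard ≤ ((n + 1) ^ k : ℕ)
    · lift Z n to Finset ℕ using finite_of_encard_le_coe h with F
      exact ⟨F, by exact_mod_cast (encard_coe_eq_coe_finsetCard F).symm.trans_le h,
        fun _ => subset_rfl⟩
    · exact ⟨∅, by simp, fun h' => absurd h' h⟩
  choose φ hcard hsub using hchoice
  exact ⟨φ, ⟨k, hcard⟩, hZ.mono hsub⟩

section Independence

variable {Ω ι : Type*} [MeasurableSpace Ω] {μ : Measure Ω} {E : ι → Set Ω}

lemma measureReal_biInter_compl_le_exp (hE : iIndepSet E μ) (hmeas : ∀ i, MeasurableSet (E i))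
    {F : Finset ι} {ε : ℝ} (hε : ∀ i ∈ F, ε ≤ μ.real (E i)) :
    μ.real (⋂ i ∈ F, (E i)ᶜ) ≤ Real.exp (-(F.card * ε)) := by
  have := hE.isProbabilityMeasure
  have hindep : μ (⋂ i ∈ F, (E i)ᶜ) = ∏ i ∈ F, μ (E i)ᶜ :=
    iIndep.meas_biInter hE fun i _ =>
      (MeasurableSpace.measurableSet_generateFrom (mem_singleton (E i))).compl
  calc μ.real (⋂ i ∈ F, (E i)ᶜ) = ∏ i ∈ F, (1 - μ.real (E i)) := by
        simp only [Measure.real, hindep, ENNReal.toReal_prod]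
        exact Finset.prod_congr rfl fun i _ => probReal_compl_eq_one_sub (hmeas i)
    _ ≤ ∏ _i ∈ F, Real.exp (-ε) := by
        refine Finset.prod_le_prod (fun i _ => sub_nonneg.2 measureReal_le_one) fun i hi => ?_
        linarith [hε i hi, Real.one_sub_le_exp_neg ε]
    _ = Real.exp (-(F.card * ε)) := by rw [Finset.prod_const, ← Real.exp_nat_mul, mul_neg]

lemma measureReal_mul_card_mul_le_one (hE : iIndepSet E μ) (hmeas : ∀ i, MeasurableSet (E i))
    {W : Set Ω} {F : Finset ι} {ε : ℝ} (hε : ∀ i ∈ F, ε ≤ μ.real (E i))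
    (hW : ∀ i ∈ F, μ (W ∩ E i) = 0) : μ.real W * (F.card * ε) ≤ 1 := by
  have := hE.isProbabilityMeasure
  have hsub : W ≤ᵐ[μ] (⋂ i ∈ F, (E i)ᶜ : Set Ω) := by
    have hae : ∀ᵐ x ∂μ, ∀ i ∈ F, x ∉ W ∩ E i :=
      (ae_ball_iff F.countable_toSet).2 fun i hi => measure_eq_zero_iff_ae_notMem.1 (hW i hi)
    filter_upwards [hae] with x hx hxW
    exact mem_iInter₂.2 fun i hi hxE => hx i hi ⟨hxW, hxE⟩
  have hexp : μ.real W ≤ Real.exp (-(F.card * ε)) :=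
    (ENNReal.toReal_mono (measure_ne_top _ _) (measure_mono_ae hsub)).trans
      (measureReal_biInter_compl_le_exp hE hmeas hε)
  calc μ.real W * (F.card * ε) ≤ μ.real W * Real.exp (F.card * ε) := by
        gcongr
        linarith [Real.add_one_le_exp (F.card * ε)]
    _ ≤ Real.exp (-(F.card * ε)) * Real.exp (F.card * ε) := by gcongr
    _ = 1 := by rw [← Real.exp_add, neg_add_cancel, Real.exp_zero]

end Independence

variable {X : Type u} [TopologicalSpace X] [MeasurableSpace X] {μ : Measure X}

/-- A double sequence of open sets through which null sets code functions: `f` is coded by the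
null set `limsup (fun n => G n (f n))`. Independence in `i` ensures that a set of positive measure
can be almost disjoint from only few `G n i` with the same `n`. -/
structure IsNullCoding (μ : Measure X) (G : ℕ → ℕ → Set X) : Prop where
  isOpen : ∀ n i, IsOpen (G n i)
  iIndepSet : ∀ n, iIndepSet (G n) μ
  tsum_ne_top : ∀ f : ℕ → ℕ, ∑' n, μ (G n (f n)) ≠ ∞
  exists_one_le : ∃ k : ℕ, ∀ᶠ n : ℕ in atTop, ∀ i, 1 ≤ ((n : ℝ) + 1) ^ k * μ.real (G n i)

lemma nonempty_support_inter_limsup [HereditarilyLindelofSpace X] {ν : Measure X}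
    [BaireSpace ν.support] (hν : ν ≠ 0) {𝓑 : Set (Set X)} (h𝓑 : IsTopologicalBasis 𝓑)
    {G : ℕ → Set X} (hG : ∀ n, IsOpen (G n))
    (hfreq : ∀ V ∈ 𝓑, ν V ≠ 0 → ∃ᶠ n in atTop, ν (V ∩ G n) ≠ 0) :
    (ν.support ∩ limsup G atTop).Nonempty := by
  have : Nonempty ν.support := (Measure.nonempty_support hν).to_subtype
  let U (m : ℕ) : Set ν.support := Subtype.val ⁻¹' ⋃ n ≥ m, G n
  have hUo (m : ℕ) : IsOpen (U m) :=
    (isOpen_biUnion fun n _ => hG n).preimage continuous_subtype_val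
  have hUd (m : ℕ) : Dense (U m) := by
    refine (h𝓑.isInducing Topology.IsInducing.subtypeVal).dense_iff.2 ?_
    rintro _ ⟨V, hV, rfl⟩ ⟨x, hxV⟩
    have hpos : ν V ≠ 0 := ((Measure.mem_support_iff_forall _).1 x.2 V (h𝓑.mem_nhds hV hxV)).ne'
    obtain ⟨n, hn, hVn⟩ := frequently_atTop.1 (hfreq V hV hpos) m
    obtain ⟨y, ⟨hyV, hyG⟩, hy⟩ := Measure.nonempty_inter_support_of_pos (pos_iff_ne_zero.2 hVn)
    exact ⟨⟨y, hy⟩, hyV, mem_biUnion hn hyG⟩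
  obtain ⟨x, hx⟩ := (dense_iInter_of_isOpen_nat hUo hUd).nonempty
  refine ⟨x, x.2, ?_⟩
  rw [mem_limsup_iff_frequently_mem, frequently_atTop]
  intro m
  simpa [U] using mem_iInter.1 hx m

namespace IsNullCoding

variable {G : ℕ → ℕ → Set X}

lemma measure_limsup_eq_zero (hG : IsNullCoding μ G) (f : ℕ → ℕ) :
    μ (limsup (fun n => G n (f n)) atTop) = 0 :=
  measure_limsup_atTop_eq_zero (hG.tsum_ne_top f)

lemma exists_isSlalom [OpensMeasurableSpace X] (hG : IsNullCoding μ G)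
    {W : Set X} (hW : μ W ≠ 0) :
    ∃ φ, IsSlalom φ ∧ ∀ᶠ n in atTop, {i | μ (W ∩ G n i) = 0} ⊆ φ n := by
  have := (hG.iIndepSet 0).isProbabilityMeasure
  obtain ⟨k, hk⟩ := hG.exists_one_le
  refine exists_isSlalom_of_encard_le (k := k + 1) ?_
  have hδ : 0 < μ.real W := ENNReal.toReal_pos hW (measure_ne_top _ _)
  filter_upwards [hk, tendsto_natCast_atTop_atTop.eventually_ge_atTop (μ.real W)⁻¹]
    with n hn hδn
  refine encard_le_of_forall_finset_card_le fun F hF => ?_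
  have hcard : μ.real W * (F.card * (((n : ℝ) + 1) ^ k)⁻¹) ≤ 1 :=
    measureReal_mul_card_mul_le_one (hG.iIndepSet n) (fun i => (hG.isOpen n i).measurableSet)
      (fun i _ => (inv_le_iff_one_le_mul₀' (by positivity)).2 (hn i)) hF
  have hle : (F.card : ℝ) ≤ ((n : ℝ) + 1) ^ (k + 1) :=
    calc (F.card : ℝ) ≤ (μ.real W)⁻¹ * ((n : ℝ) + 1) ^ k := by
          rwa [← mul_assoc, ← div_eq_mul_inv, div_le_one₀ (by positivity), mul_comm,
            ← le_div_iff₀ hδ, div_eq_inv_mul] at hcard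
      _ ≤ ((n : ℝ) + 1) * ((n : ℝ) + 1) ^ k := by
          gcongr
          linarith
      _ = ((n : ℝ) + 1) ^ (k + 1) := (pow_succ' _ _).symm
  exact_mod_cast hle

lemma exists_countable_slaloms [PolishSpace X] [BorelSpace X]
    (hG : IsNullCoding μ G) {A : Set X} (hA : μ A = 0) :
    ∃ Ψ : Set (ℕ → Finset ℕ), Ψ.Countable ∧ (∀ φ ∈ Ψ, IsSlalom φ) ∧
      ∀ f : ℕ → ℕ, limsup (fun n => G n (f n)) atTop ⊆ A → ∃ φ ∈ Ψ, ∀ᶠ n in atTop, f n ∈ φ n := by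
  have := (hG.iIndepSet 0).isProbabilityMeasure
  have hpos : 0 < μ (toMeasurable μ A)ᶜ := by
    rw [(prob_compl_eq_one_iff (measurableSet_toMeasurable μ A)).2 (by rwa [measure_toMeasurable])]
    exact zero_lt_one
  obtain ⟨K, hKA, hK, hKpos⟩ :=
    (measurableSet_toMeasurable μ A).compl.exists_lt_isClosed_of_ne_top (measure_ne_top μ _) hpos
  let 𝓑 : Set (Set X) := {V ∈ countableBasis X | μ (V ∩ K) ≠ 0}
  have : Countable 𝓑 := ((countable_countableBasis X).mono (sep_subset _ _)).to_subtype
  choose φ hφ hφsub using fun V : 𝓑 => hG.exists_isSlalom V.2.2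
  refine ⟨range φ, countable_range φ, forall_mem_range.2 hφ, fun f hf => ?_⟩
  have hdisj : ¬ ((μ.restrict K).support ∩ limsup (fun n => G n (f n)) atTop).Nonempty := by
    rintro ⟨x, hxK, hx⟩
    have hsub : (μ.restrict K).support ⊆ K :=
      Measure.support_subset_of_isClosed hK (ae_restrict_mem hK.measurableSet)
    exact hKA (hsub hxK) (subset_toMeasurable μ A (hf hx))
  have := (Measure.isClosed_support (μ := μ.restrict K)).polishSpace
  have hnot := mt (nonempty_support_inter_limsup (Measure.restrict_eq_zero.not.2 hKpos.ne')
    (isBasis_countableBasis X) fun n => hG.isOpen n (f n)) hdisj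
  push Not at hnot
  obtain ⟨V, hV, hVK, hnull⟩ := hnot
  rw [Measure.restrict_apply' hK.measurableSet] at hVK
  refine ⟨φ ⟨V, hV, hVK⟩, mem_range_self _, ?_⟩
  filter_upwards [hnull, hφsub ⟨V, hV, hVK⟩] with n hn hsub
  refine hsub ?_
  rwa [Measure.restrict_apply' hK.measurableSet, inter_right_comm] at hn

theorem localizationNumber_le_nullCof [PolishSpace X] [BorelSpace X]
    (hG : IsNullCoding μ G) : lift.{u} localizationNumber ≤ nullCof μ := by
  obtain ⟨𝒜, hcard, hnull, hcof⟩ := exists_isNullCofinal_mk_eq μ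
  choose Ψ hcount hslalom hΨ using fun A : 𝒜 => hG.exists_countable_slaloms (hnull A A.2)
  have hloc : IsLocalizing (⋃ A, Ψ A) := by
    refine ⟨fun φ hφ => ?_, fun f => ?_⟩
    · obtain ⟨A, hA⟩ := mem_iUnion.1 hφ
      exact hslalom A φ hA
    · obtain ⟨A, hA, hsub⟩ := hcof _ (hG.measure_limsup_eq_zero f)
      obtain ⟨φ, hφ, hfφ⟩ := hΨ ⟨A, hA⟩ f hsub
      exact ⟨φ, mem_iUnion.2 ⟨_, hφ⟩, hfφ⟩
  have hle : lift.{u} localizationNumber ≤ nullCof μ * ℵ₀ :=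
    calc lift.{u} localizationNumber ≤ lift.{u} #(⋃ A, Ψ A) := lift_le.2 hloc.localizationNumber_le
      _ ≤ lift.{0} #𝒜 * ⨆ A, lift.{u} #(Ψ A) := mk_iUnion_le_lift Ψ
      _ ≤ nullCof μ * ℵ₀ := by
          rw [lift_uzero, hcard]
          gcongr
          exact ciSup_le' fun A => lift_le_aleph0.2 (le_aleph0_iff_set_countable.2 (hcount A))
  have hlt : ℵ₀ < nullCof μ * ℵ₀ := (aleph0_lt_lift.2 aleph0_lt_localizationNumber).trans_le hle
  have hinf : ℵ₀ ≤ nullCof μ := by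
    by_contra! h
    exact hlt.not_ge ((mul_le_mul_left h.le _).trans_eq aleph0_mul_aleph0)
  rwa [mul_aleph0_eq hinf] at hle

end IsNullCoding

end SlalomsFromNullSets

theorem stmt13_general {X : Type u} [TopologicalSpace X] [PolishSpace X] [MeasurableSpace X]
    [BorelSpace X] {μ : Measure X} {G : ℕ → ℕ → Set X} (hG : IsNullCoding μ G) :
    nullCof μ = lift.{u} localizationNumber :=
  have := (hG.iIndepSet 0).isProbabilityMeasure
  le_antisymm (nullCof_le_localizationNumber μ) hG.localizationNumber_le_nullCof

section FairCoin

/-- The number of coordinates read by the `n`-th level of `trueBlock`. The value makes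
`2 ^ blockLength n` lie between `(n + 1) ^ 2` and `4 * (n + 1) ^ 2`. -/
def blockLength (n : ℕ) : ℕ := 2 * (Nat.log 2 (n + 1) + 1)

/-- The cylinder of points that are constantly `true` on the first `blockLength n` coordinates of
the `i`-th row, where `Nat.pair` splits the coordinates into infinitely many rows. -/
def trueBlock (n i : ℕ) : Set (ℕ → Bool) := {x | ∀ j < blockLength n, x (Nat.pair i j) = true}

lemma sq_le_two_pow_blockLength (n : ℕ) : ((n : ℝ) + 1) ^ 2 ≤ 2 ^ blockLength n := by
  have h : n + 1 ≤ 2 ^ (Nat.log 2 (n + 1) + 1) := (Nat.lt_pow_succ_log_self one_lt_two _).le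
  rw [blockLength, pow_mul']
  gcongr
  exact_mod_cast h

lemma two_pow_blockLength_le (n : ℕ) : (2 : ℝ) ^ blockLength n ≤ 4 * ((n : ℝ) + 1) ^ 2 := by
  have h : (2 : ℝ) ^ Nat.log 2 (n + 1) ≤ n + 1 := by
    exact_mod_cast Nat.pow_log_le_self 2 n.succ_ne_zero
  calc (2 : ℝ) ^ blockLength n = 4 * (2 ^ Nat.log 2 (n + 1)) ^ 2 := by
        rw [blockLength, pow_mul', pow_succ]; ring
    _ ≤ 4 * ((n : ℝ) + 1) ^ 2 := by gcongr

lemma tsum_half_pow_blockLength_ne_top : ∑' n, (1 / 2 : ℝ≥0∞) ^ blockLength n ≠ ∞ := by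
  have hsum : Summable fun n : ℕ => (1 / 2 : ℝ) ^ blockLength n := by
    refine ((summable_nat_add_iff 1).2 (Real.summable_one_div_nat_pow.2 one_lt_two)).of_nonneg_of_le
      (fun n => by positivity) fun n => ?_
    rw [one_div_pow, Nat.cast_succ]
    exact one_div_le_one_div_of_le (by positivity) (sq_le_two_pow_blockLength n)
  convert hsum.tsum_ofReal_ne_top with n
  rw [ENNReal.ofReal_pow (by positivity), one_div, one_div, ENNReal.ofReal_inv_of_pos two_pos,
    ENNReal.ofReal_ofNat]

lemma isOpen_trueBlock (n i : ℕ) : IsOpen (trueBlock n i) := by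
  have h : trueBlock n i = ⋂ j ∈ Finset.range (blockLength n),
      (fun x : ℕ → Bool => x (Nat.pair i j)) ⁻¹' {true} := by
    ext x
    simp [trueBlock]
  rw [h]
  exact isOpen_biInter_finset fun j _ => (isOpen_discrete _).preimage (continuous_apply _)

namespace IsFairCoin

variable {μ : Measure (ℕ → Bool)}

lemma measure_biInter_trueBlock (hμ : IsFairCoin μ) (n : ℕ) (T : Finset ℕ) :
    μ (⋂ i ∈ T, trueBlock n i) = ((1 / 2) ^ blockLength n) ^ T.card := by
  have h := hμ.2 ((T ×ˢ Finset.range (blockLength n)).map Nat.pairEquiv.toEmbedding) fun _ => true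
  rw [Finset.card_map, Finset.card_product, Finset.card_range, mul_comm, pow_mul] at h
  rw [← h]
  congr 1
  ext x
  simp only [trueBlock, mem_iInter, mem_ofPred_eq, Finset.mem_map_equiv, Finset.mem_product,
    Finset.mem_range, Nat.pairEquiv_symm_apply, and_imp]
  exact ⟨fun h i hi hj => by simpa using h _ hi _ hj,
    fun h i hi j hj => h _ (by simpa) (by simpa)⟩

lemma measure_trueBlock (hμ : IsFairCoin μ) (n i : ℕ) :
    μ (trueBlock n i) = (1 / 2) ^ blockLength n := by
  simpa using hμ.measure_biInter_trueBlock n {i}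

lemma isNullCoding_trueBlock (hμ : IsFairCoin μ) : IsNullCoding μ trueBlock where
  isOpen := isOpen_trueBlock
  iIndepSet n := by
    refine (iIndepSet_iff_meas_biInter fun i => (isOpen_trueBlock n i).measurableSet).2 fun T => ?_
    simp only [hμ.measure_biInter_trueBlock, hμ.measure_trueBlock, Finset.prod_const]
  tsum_ne_top f := by
    simpa only [hμ.measure_trueBlock] using tsum_half_pow_blockLength_ne_top
  exists_one_le := by
    refine ⟨3, ?_⟩
    filter_upwards [eventually_ge_atTop 3] with n hn i
    have hn' : (4 : ℝ) ≤ n + 1 := by exact_mod_cast Nat.succ_le_succ hn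
    rw [Measure.real, hμ.measure_trueBlock, ENNReal.toReal_pow, one_div, ENNReal.toReal_inv,
      ENNReal.toReal_ofNat, inv_pow, ← div_eq_mul_inv, one_le_div (by positivity)]
    calc (2 : ℝ) ^ blockLength n ≤ 4 * ((n : ℝ) + 1) ^ 2 := two_pow_blockLength_le n
      _ ≤ ((n : ℝ) + 1) * ((n : ℝ) + 1) ^ 2 := by gcongr
      _ = ((n : ℝ) + 1) ^ 3 := (pow_succ' _ _).symm

end IsFairCoin

end FairCoin

/-- cof(N) = d_{⊆*}. -/
theorem stmt13 (μ : Measure (ℕ → Bool)) (hμ : IsFairCoin μ) :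
    sInf {c : Cardinal | ∃ 𝒜 : Set (Set (ℕ → Bool)), #𝒜 = c ∧
        (∀ A ∈ 𝒜, μ A = 0) ∧ ∀ B : Set (ℕ → Bool), μ B = 0 → ∃ A ∈ 𝒜, B ⊆ A} =
      sInf {c : Cardinal | ∃ Φ : Set (ℕ → Finset ℕ), #Φ = c ∧
        (∀ φ ∈ Φ, IsSlalom φ) ∧ ∀ f : ℕ → ℕ, ∃ φ ∈ Φ, ∀ᶠ n in atTop, f n ∈ φ n} := by
  have : PolishSpace (ℕ → Bool) := {}
  exact (stmt13_general hμ.isNullCoding_trueBlock).trans (lift_uzero _)
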